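/- Conventional mass scaling with uniform scaling parameter α > 1: let K = Σ_{e=1}^N L_e^T·K_e·L_e with each K_e ∈ ℝ^{m×m} symmetric positive semidefinite, and let M = Σ_{e=1}^N L_e^T·M_e·L_e where each M_e = diag(d_{e,1},…,d_{e,m}) is a diagonal matrix with positive entries. Let M̄ = Σ_{e=1}^N L_e^T·M̄_e·L_e where each M̄_e is diagonal with (M̄_e)_{jj} ∈ {d_{e,j}, α·d_{e,j}} for each j. Then for every i = 1,…,n: λ_i(K, M̄) ≤ λ_i(K, M) ≤ α·λ_i(K, M̄); equivalently, the scaled and unscaled eigenfrequencies satisfy 1 ≤ ω_i/ω̄_i ≤ √α wherever ω̄_i > 0. -/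

import Mathlib

open Matrix

/-- The eigenvalues of a symmetric real matrix listed in ascending order with multiplicity. -/
noncomputable def sortedEigs {n : ℕ} (M : Matrix (Fin n) (Fin n) ℝ) : Fin n → ℝ :=
  if h : M.IsHermitian then h.eigenvalues ∘ Tuple.sort h.eigenvalues else 0

-- The generalized eigenvalues `λ_1(A,B) ≤ … ≤ λ_n(A,B)`: the eigenvalues of
-- `B^{-1/2} A B^{-1/2}` in ascending order with multiplicity (`B` positive definite).
open Classical in
open scoped MatrixOrder in
noncomputable def genEigs {n : ℕ} (A B : Matrix (Fin n) (Fin n) ℝ) : Fin n → ℝ :=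
  if hB : B.PosDef then sortedEigs ((CFC.sqrt B)⁻¹ * A * (CFC.sqrt B)⁻¹) else 0

/-- The Boolean connectivity matrix `L_e` of an element whose local-to-global map is `σ`:
its rows are the standard basis vectors of `ℝ^n` selected by `σ`. -/
def elemL {ι : Type*} {n : ℕ} (σ : ι → Fin n) : Matrix ι (Fin n) ℝ :=
  Matrix.of fun i j => if σ i = j then 1 else 0


/-!
With `S = B^{1/2}`, the substitution `y = S x` carries an orthonormal eigenbasis of `S⁻¹ A S⁻¹` to
a basis in whose coordinates `c` one has `xᵀ B x = ∑ j, c j ^ 2` and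
`xᵀ A x = ∑ j, λ j (A, B) * c j ^ 2`. Intersecting spans of the first and of the last basis vectors
gives the Courant-Fischer criterion: `λ i (A, B) ≤ t` if and only if `xᵀ A x ≤ t * xᵀ B x` on a
subspace of dimension greater than `i` (indices starting at `0`). Hence for `A` positive
semidefinite, `B₁ ≤ c • B₂` in the Loewner order forces `λ i (A, B₂) ≤ c * λ i (A, B₁)`. Assembly is
monotone for the Loewner order, so `M_e ≤ M̄_e ≤ α • M_e` on every element yields `M ≤ M̄ ≤ α • M`,
and both mass scaling bounds are instances of this comparison.
-/

open Module

section SpanOfBasis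

variable {ι K V : Type*} [Ring K] [AddCommGroup V] [Module K V]

lemma finrank_span_basis_image [StrongRankCondition K] (b : Basis ι K V) (s : Finset ι) :
    finrank K (Submodule.span K (b '' s)) = s.card := by
  have := nontrivial_of_invariantBasisNumber K
  have hli := b.linearIndependent.comp (Subtype.val : s → ι) Subtype.val_injective
  rw [Set.image_eq_range, ← Fintype.card_coe s]
  exact finrank_span_eq_card hli

lemma repr_eq_zero_of_mem_span_image (b : Basis ι K V) {s : Set ι} {x : V}
    (hx : x ∈ Submodule.span K (b '' s)) {j : ι} (hj : j ∉ s) : b.repr x j = 0 :=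
  Finsupp.notMem_support_iff.mp fun h => hj (b.mem_span_image.mp hx h)

end SpanOfBasis

section QuadraticForms

variable {n : Type*} {A B : Matrix n n ℝ}

lemma dotProduct_mulVec_self_nonneg [Fintype n] (hA : A.PosSemidef) (x : n → ℝ) :
    0 ≤ x ⬝ᵥ A *ᵥ x := by
  simpa only [star_trivial] using hA.dotProduct_mulVec_nonneg x

lemma dotProduct_mulVec_self_pos [Fintype n] (hA : A.PosDef) {x : n → ℝ} (hx : x ≠ 0) :
    0 < x ⬝ᵥ A *ᵥ x := by
  simpa only [star_trivial] using hA.dotProduct_mulVec_pos hx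

open scoped MatrixOrder

lemma dotProduct_mulVec_le_of_le [Fintype n] (hAB : A ≤ B) (x : n → ℝ) :
    x ⬝ᵥ A *ᵥ x ≤ x ⬝ᵥ B *ᵥ x := by
  have := dotProduct_mulVec_self_nonneg (le_iff.mp hAB) x
  rwa [sub_mulVec, dotProduct_sub, sub_nonneg] at this

lemma posDef_of_le (hA : A.PosDef) (hAB : A ≤ B) : B.PosDef := by
  simpa only [add_sub_cancel] using hA.add_posSemidef (le_iff.mp hAB)

lemma diagonal_le_diagonal [DecidableEq n] {d s : n → ℝ} (hds : d ≤ s) :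
    diagonal d ≤ diagonal s := by
  rw [le_iff, diagonal_sub, posSemidef_diagonal_iff]
  exact fun j => sub_nonneg.mpr (hds j)

lemma diagonal_le_of_eq_or_eq_mul [DecidableEq n] {α : ℝ} (hα : 1 ≤ α) {d s : n → ℝ}
    (hd : ∀ j, 0 ≤ d j) (hs : ∀ j, s j = d j ∨ s j = α * d j) :
    diagonal d ≤ diagonal s ∧ diagonal s ≤ α • diagonal d := by
  have le_mul (j : n) : d j ≤ α * d j := le_mul_of_one_le_left (hd j) hα
  rw [← diagonal_smul]
  refine ⟨diagonal_le_diagonal fun j => ?_, diagonal_le_diagonal fun j => ?_⟩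
  · exact (hs j).elim ge_of_eq fun h => (le_mul j).trans_eq h.symm
  · exact (hs j).elim (fun h => h.trans_le (le_mul j)) le_of_eq

end QuadraticForms

section Eigenvalues

variable {n : ℕ} {A B : Matrix (Fin n) (Fin n) ℝ}

lemma sortedEigs_monotone (A : Matrix (Fin n) (Fin n) ℝ) : Monotone (sortedEigs A) := by
  unfold sortedEigs
  split_ifs with hA
  · exact Tuple.monotone_sort hA.eigenvalues
  · exact monotone_const

lemma genEigs_monotone (A B : Matrix (Fin n) (Fin n) ℝ) : Monotone (genEigs A B) := by
  unfold genEigs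
  split_ifs
  · exact sortedEigs_monotone _
  · exact monotone_const

lemma exists_orthonormalBasis_sortedEigs (hA : A.IsHermitian) :
    ∃ u : OrthonormalBasis (Fin n) ℝ (EuclideanSpace ℝ (Fin n)),
      ∀ j, A *ᵥ (u j).ofLp = sortedEigs A j • (u j).ofLp := by
  refine ⟨hA.eigenvectorBasis.reindex (Tuple.sort hA.eigenvalues).symm, fun j => ?_⟩
  simp only [OrthonormalBasis.reindex_apply, Equiv.symm_symm, hA.mulVec_eigenvectorBasis,
    sortedEigs, dif_pos hA, Function.comp_apply]

lemma exists_basis_diagonalizing_sortedEigs (hA : A.IsHermitian) :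
    ∃ b : Basis (Fin n) ℝ (Fin n → ℝ), ∀ x,
      x ⬝ᵥ x = ∑ j, b.repr x j ^ 2 ∧
      x ⬝ᵥ A *ᵥ x = ∑ j, sortedEigs A j * b.repr x j ^ 2 := by
  obtain ⟨u, hu⟩ := exists_orthonormalBasis_sortedEigs hA
  let b := u.toBasis.map (WithLp.linearEquiv 2 ℝ (Fin n → ℝ))
  have repr_eq (x : Fin n → ℝ) (j : Fin n) : b.repr x j = x ⬝ᵥ (u j).ofLp := by
    simp [b, u.repr_apply_apply, EuclideanSpace.inner_eq_star_dotProduct]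
  have parseval (x y : Fin n → ℝ) : x ⬝ᵥ y = ∑ j, b.repr x j * b.repr y j := by
    simp only [repr_eq]
    have := u.sum_inner_mul_inner (WithLp.toLp 2 y) (WithLp.toLp 2 x)
    simpa [EuclideanSpace.inner_eq_star_dotProduct, dotProduct_comm, mul_comm] using this.symm
  have repr_mulVec (x : Fin n → ℝ) (j : Fin n) :
      b.repr (A *ᵥ x) j = sortedEigs A j * b.repr x j := by
    rw [repr_eq, repr_eq, dotProduct_comm, dotProduct_mulVec, ← mulVec_transpose,
      (isHermitian_iff_isSymm.mp hA).eq, hu, smul_dotProduct, smul_eq_mul, dotProduct_comm]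
  refine ⟨b, fun x => ⟨?_, ?_⟩⟩
  · simp only [parseval x x, sq]
  · simp only [parseval x, repr_mulVec, sq, mul_left_comm]

open scoped MatrixOrder in
lemma exists_basis_diagonalizing_genEigs (hA : A.IsHermitian) (hB : B.PosDef) :
    ∃ b : Basis (Fin n) ℝ (Fin n → ℝ), ∀ x,
      x ⬝ᵥ B *ᵥ x = ∑ j, b.repr x j ^ 2 ∧
      x ⬝ᵥ A *ᵥ x = ∑ j, genEigs A B j * b.repr x j ^ 2 := by
  set S := CFC.sqrt B
  have S_mul_S : S * S = B := CFC.sqrt_mul_sqrt_self B hB.posSemidef.nonneg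
  have S_symm : Sᵀ = S := (isHermitian_iff_isSymm.mp (CFC.sqrt_nonneg B).posSemidef.isHermitian).eq
  have S_unit : IsUnit S.det :=
    (isUnit_iff_isUnit_det S).mp hB.isStrictlyPositive.sqrt.isUnit
  have hC : (S⁻¹ * A * S⁻¹).IsHermitian := by
    rw [isHermitian_iff_isSymm, IsSymm, transpose_mul, transpose_mul, transpose_nonsing_inv, S_symm,
      (isHermitian_iff_isSymm.mp hA).eq, Matrix.mul_assoc]
  have conj_S (X : Matrix (Fin n) (Fin n) ℝ) (x : Fin n → ℝ) :
      (S *ᵥ x) ⬝ᵥ X *ᵥ (S *ᵥ x) = x ⬝ᵥ (S * X * S) *ᵥ x := by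
    rw [← mulVec_mulVec, ← mulVec_mulVec, dotProduct_mulVec x, ← mulVec_transpose, S_symm]
  obtain ⟨b, hb⟩ := exists_basis_diagonalizing_sortedEigs hC
  let e := toLin'OfInv (mul_nonsing_inv S S_unit) (nonsing_inv_mul S S_unit)
  refine ⟨b.map e, fun x => ?_⟩
  have repr_eq : (b.map e).repr x = b.repr (S *ᵥ x) := rfl
  rw [repr_eq, genEigs, dif_pos hB, ← (hb (S *ᵥ x)).1, ← (hb (S *ᵥ x)).2, conj_S]
  have conj_C : S * (S⁻¹ * A * S⁻¹) * S = A := by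
    rw [Matrix.mul_assoc S⁻¹, mul_nonsing_inv_cancel_left _ _ S_unit,
      nonsing_inv_mul_cancel_right _ _ S_unit]
  have norm_S : (S *ᵥ x) ⬝ᵥ (S *ᵥ x) = x ⬝ᵥ B *ᵥ x := by
    simpa [S_mul_S] using conj_S 1 x
  exact ⟨norm_S.symm, by rw [conj_C]⟩

lemma exists_submodule_le_genEigs_mul (hA : A.IsHermitian) (hB : B.PosDef) (i : Fin n) :
    ∃ W : Submodule ℝ (Fin n → ℝ), finrank ℝ W = i + 1 ∧
      ∀ x ∈ W, x ⬝ᵥ A *ᵥ x ≤ genEigs A B i * (x ⬝ᵥ B *ᵥ x) := by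
  obtain ⟨b, hb⟩ := exists_basis_diagonalizing_genEigs hA hB
  refine ⟨Submodule.span ℝ (b '' (Finset.Iic i)), ?_, fun x hx => ?_⟩
  · rw [finrank_span_basis_image, Fin.card_Iic]
  rw [(hb x).1, (hb x).2, Finset.mul_sum]
  refine Finset.sum_le_sum fun j _ => ?_
  by_cases hj : j ∈ (Finset.Iic i : Set (Fin n))
  · have := genEigs_monotone A B (Finset.mem_Iic.mp hj)
    gcongr
  · simp [repr_eq_zero_of_mem_span_image b hx hj]

lemma exists_submodule_genEigs_mul_le (hA : A.IsHermitian) (hB : B.PosDef) (i : Fin n) :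
    ∃ W : Submodule ℝ (Fin n → ℝ), finrank ℝ W = n - i ∧
      ∀ x ∈ W, genEigs A B i * (x ⬝ᵥ B *ᵥ x) ≤ x ⬝ᵥ A *ᵥ x := by
  obtain ⟨b, hb⟩ := exists_basis_diagonalizing_genEigs hA hB
  refine ⟨Submodule.span ℝ (b '' (Finset.Ici i)), ?_, fun x hx => ?_⟩
  · rw [finrank_span_basis_image, Fin.card_Ici]
  rw [(hb x).1, (hb x).2, Finset.mul_sum]
  refine Finset.sum_le_sum fun j _ => ?_
  by_cases hj : j ∈ (Finset.Ici i : Set (Fin n))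
  · have := genEigs_monotone A B (Finset.mem_Ici.mp hj)
    gcongr
  · simp [repr_eq_zero_of_mem_span_image b hx hj]

theorem genEigs_le_iff_exists_submodule (hA : A.IsHermitian) (hB : B.PosDef) {i : Fin n} {t : ℝ} :
    genEigs A B i ≤ t ↔ ∃ W : Submodule ℝ (Fin n → ℝ), i < finrank ℝ W ∧
      ∀ x ∈ W, x ⬝ᵥ A *ᵥ x ≤ t * (x ⬝ᵥ B *ᵥ x) := by
  constructor
  · intro hit
    obtain ⟨W, hWdim, hW⟩ := exists_submodule_le_genEigs_mul hA hB i
    refine ⟨W, by omega, fun x hx => (hW x hx).trans ?_⟩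
    have := dotProduct_mulVec_self_nonneg hB.posSemidef x
    gcongr
  · rintro ⟨W, hWdim, hW⟩
    obtain ⟨W', hW'dim, hW'⟩ := exists_submodule_genEigs_mul_le hA hB i
    have not_disjoint : ¬ Disjoint W W' := fun h => by
      have := Submodule.finrank_add_finrank_le_of_disjoint h
      rw [finrank_fin_fun] at this
      omega
    obtain ⟨x, hxW, hxW', hx⟩ : ∃ x ∈ W, x ∈ W' ∧ x ≠ 0 := by
      simpa [Submodule.disjoint_def] using not_disjoint
    exact le_of_mul_le_mul_right ((hW' x hxW').trans (hW x hxW)) (dotProduct_mulVec_self_pos hB hx)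

lemma genEigs_nonneg (hA : A.PosSemidef) (hB : B.PosDef) (i : Fin n) : 0 ≤ genEigs A B i := by
  obtain ⟨b, hb⟩ := exists_basis_diagonalizing_genEigs hA.isHermitian hB
  have := dotProduct_mulVec_self_nonneg hA (b i)
  simpa [(hb (b i)).2, Finsupp.single_apply] using this

open scoped MatrixOrder in
theorem genEigs_le_mul_genEigs {B₁ B₂ : Matrix (Fin n) (Fin n) ℝ} (hA : A.PosSemidef)
    (hB₁ : B₁.PosDef) (hB₂ : B₂.PosDef) {c : ℝ} (hB : B₁ ≤ c • B₂) (i : Fin n) :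
    genEigs A B₂ i ≤ c * genEigs A B₁ i := by
  obtain ⟨W, hWdim, hW⟩ :=
    (genEigs_le_iff_exists_submodule hA.isHermitian hB₁).mp (le_refl (genEigs A B₁ i))
  refine (genEigs_le_iff_exists_submodule hA.isHermitian hB₂).mpr ⟨W, hWdim, fun x hx => ?_⟩
  calc x ⬝ᵥ A *ᵥ x ≤ genEigs A B₁ i * (x ⬝ᵥ B₁ *ᵥ x) := hW x hx
    _ ≤ genEigs A B₁ i * (x ⬝ᵥ (c • B₂) *ᵥ x) :=
      mul_le_mul_of_nonneg_left (dotProduct_mulVec_le_of_le hB x) (genEigs_nonneg hA hB₁ i)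
    _ = c * genEigs A B₁ i * (x ⬝ᵥ B₂ *ᵥ x) := by
      rw [smul_mulVec, dotProduct_smul, smul_eq_mul]
      ring

end Eigenvalues

section Assembly

variable {ι : Type*} [Fintype ι] {κ : ι → Type*} [∀ e, Fintype (κ e)] {n : ℕ}

/-- The assembled matrix `∑ e, L_eᵀ * A_e * L_e` of element matrices `A_e`, where `σ e` sends the
local degrees of freedom of the element `e` to the global ones. Elements may differ in their number
of local degrees of freedom. -/
def assemble (σ : ∀ e, κ e → Fin n) (A : ∀ e, Matrix (κ e) (κ e) ℝ) : Matrix (Fin n) (Fin n) ℝ :=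
  ∑ e, (elemL (σ e))ᵀ * A e * elemL (σ e)

variable {A : ∀ e, Matrix (κ e) (κ e) ℝ}

lemma elemL_mulVec {κ : Type*} (σ : κ → Fin n) (x : Fin n → ℝ) : elemL σ *ᵥ x = x ∘ σ := by
  ext j
  simp [elemL, mulVec, dotProduct]

lemma dotProduct_assemble_mulVec (σ : ∀ e, κ e → Fin n) (A : ∀ e, Matrix (κ e) (κ e) ℝ)
    (x : Fin n → ℝ) :
    x ⬝ᵥ assemble σ A *ᵥ x = ∑ e, (x ∘ σ e) ⬝ᵥ A e *ᵥ (x ∘ σ e) := by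
  rw [assemble, sum_mulVec, dotProduct_sum]
  refine Finset.sum_congr rfl fun e _ => ?_
  rw [← mulVec_mulVec, ← mulVec_mulVec, dotProduct_mulVec, vecMul_transpose, elemL_mulVec]

lemma assemble_sub (σ : ∀ e, κ e → Fin n) (A B : ∀ e, Matrix (κ e) (κ e) ℝ) :
    assemble σ (A - B) = assemble σ A - assemble σ B := by
  simp only [assemble, Pi.sub_apply, Matrix.mul_sub, Matrix.sub_mul, Finset.sum_sub_distrib]

lemma assemble_smul (σ : ∀ e, κ e → Fin n) (c : ℝ) (A : ∀ e, Matrix (κ e) (κ e) ℝ) :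
    assemble σ (c • A) = c • assemble σ A := by
  simp only [assemble, Pi.smul_apply, Matrix.mul_smul, Matrix.smul_mul, Finset.smul_sum]

lemma posSemidef_assemble (σ : ∀ e, κ e → Fin n) (hA : ∀ e, (A e).PosSemidef) :
    (assemble σ A).PosSemidef :=
  posSemidef_sum _ fun e _ => by
    simpa only [conjTranspose_eq_transpose_of_trivial] using
      (hA e).conjTranspose_mul_mul_same (elemL (σ e))

lemma posDef_assemble {σ : ∀ e, κ e → Fin n} (hσ : ∀ i, ∃ e j, σ e j = i)
    (hA : ∀ e, (A e).PosDef) : (assemble σ A).PosDef := by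
  have hsemi := posSemidef_assemble σ fun e => (hA e).posSemidef
  refine PosDef.of_dotProduct_mulVec_pos hsemi.isHermitian fun x hx => ?_
  obtain ⟨i, hi⟩ := Function.ne_iff.mp hx
  obtain ⟨e, j, rfl⟩ := hσ i
  have restrict_ne_zero : x ∘ σ e ≠ 0 := Function.ne_iff.mpr ⟨j, hi⟩
  rw [star_trivial, dotProduct_assemble_mulVec]
  exact Finset.sum_pos' (fun e _ => dotProduct_mulVec_self_nonneg (hA e).posSemidef _)
    ⟨e, Finset.mem_univ e, dotProduct_mulVec_self_pos (hA e) restrict_ne_zero⟩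

open scoped MatrixOrder in
lemma assemble_mono (σ : ∀ e, κ e → Fin n) : Monotone (assemble σ) := fun A B hAB => by
  rw [le_iff, ← assemble_sub]
  exact posSemidef_assemble σ fun e => le_iff.mp (hAB e)

open scoped MatrixOrder in
theorem conventional_mass_scaling_bounds_general (σ : ∀ e, κ e → Fin n)
    (hσ : ∀ i, ∃ e j, σ e j = i) {K : Matrix (Fin n) (Fin n) ℝ} (hK : K.PosSemidef)
    {Me Mbare : ∀ e, Matrix (κ e) (κ e) ℝ} (hMe : ∀ e, (Me e).PosDef) {α : ℝ}
    (hle : ∀ e, Me e ≤ Mbare e) (hle_smul : ∀ e, Mbare e ≤ α • Me e) (i : Fin n) :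
    (genEigs K (assemble σ Mbare) i ≤ genEigs K (assemble σ Me) i ∧
      genEigs K (assemble σ Me) i ≤ α * genEigs K (assemble σ Mbare) i) ∧
    (0 < genEigs K (assemble σ Mbare) i →
      1 ≤ √(genEigs K (assemble σ Me) i) / √(genEigs K (assemble σ Mbare) i) ∧
      √(genEigs K (assemble σ Me) i) / √(genEigs K (assemble σ Mbare) i) ≤ √α) := by
  have hM : (assemble σ Me).PosDef := posDef_assemble hσ hMe
  have hM_le : assemble σ Me ≤ assemble σ Mbare := assemble_mono σ hle
  have hMbar : (assemble σ Mbare).PosDef := posDef_of_le hM hM_le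
  have hMbar_le : assemble σ Mbare ≤ α • assemble σ Me := by
    simpa only [assemble_smul] using assemble_mono σ (show Mbare ≤ α • Me from hle_smul)
  have lower : genEigs K (assemble σ Mbare) i ≤ genEigs K (assemble σ Me) i := by
    simpa using genEigs_le_mul_genEigs hK hM hMbar (c := 1) (by simpa using hM_le) i
  have upper := genEigs_le_mul_genEigs hK hMbar hM hMbar_le i
  refine ⟨⟨lower, upper⟩, fun hpos => ?_⟩
  have hsqrt := Real.sqrt_pos.mpr hpos
  rw [one_le_div hsqrt, div_le_iff₀ hsqrt, ← Real.sqrt_mul' α hpos.le]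
  exact ⟨Real.sqrt_le_sqrt lower, Real.sqrt_le_sqrt upper⟩

end Assembly

/-- **Conventional mass scaling with a uniform scaling parameter `α > 1`.**
Let `K = Σ_e L_eᵀ·K_e·L_e` with `K_e ⪰ 0` symmetric, `M = Σ_e L_eᵀ·M_e·L_e` with `M_e`
diagonal with positive diagonal `d_e`, and let `M̄ = Σ_e L_eᵀ·M̄_e·L_e` where each `M̄_e` is
diagonal with `(M̄_e)_{jj}` equal to either `d_{e,j}` or `α·d_{e,j}`. Then for every `i`
`λ_i(K,M̄) ≤ λ_i(K,M) ≤ α·λ_i(K,M̄)`; equivalently the eigenfrequencies `ω_i = √λ_i(K,M)`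
and `ω̄_i = √λ_i(K,M̄)` satisfy `1 ≤ ω_i/ω̄_i ≤ √α` wherever `ω̄_i > 0`. -/
theorem conventional_mass_scaling_bounds {N m n pmax : ℕ} (hpmax : 0 < pmax)
    (α : ℝ) (hα : 1 < α)
    (σ : Fin (N+1) → Fin (m+1) → Fin (n+1))
    (hinj : ∀ e, Function.Injective (σ e))
    (hcover : ∀ i : Fin (n+1), ∃ e j, σ e j = i)
    (hp : ∀ i : Fin (n+1), (Finset.univ.filter fun e => ∃ j, σ e j = i).card ≤ pmax)
    (Ke : Fin (N+1) → Matrix (Fin (m+1)) (Fin (m+1)) ℝ)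
    (hKe : ∀ e, (Ke e).PosSemidef)
    (d s : Fin (N+1) → Fin (m+1) → ℝ)
    (hd : ∀ e j, 0 < d e j)
    (hs : ∀ e j, s e j = d e j ∨ s e j = α * d e j)
    (K M Mbar : Matrix (Fin (n+1)) (Fin (n+1)) ℝ)
    (hK : K = ∑ e, (elemL (σ e))ᵀ * Ke e * elemL (σ e))
    (hM : M = ∑ e, (elemL (σ e))ᵀ * Matrix.diagonal (d e) * elemL (σ e))
    (hMbar : Mbar = ∑ e, (elemL (σ e))ᵀ * Matrix.diagonal (s e) * elemL (σ e)) :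
    ∀ i : Fin (n+1),
      (genEigs K Mbar i ≤ genEigs K M i ∧ genEigs K M i ≤ α * genEigs K Mbar i) ∧
      (0 < genEigs K Mbar i →
        1 ≤ Real.sqrt (genEigs K M i) / Real.sqrt (genEigs K Mbar i) ∧
        Real.sqrt (genEigs K M i) / Real.sqrt (genEigs K Mbar i) ≤ Real.sqrt α) := by
  subst hK hM hMbar
  have hle (e) := diagonal_le_of_eq_or_eq_mul hα.le (fun j => (hd e j).le) (hs e)
  exact conventional_mass_scaling_bounds_general σ hcover (posSemidef_assemble σ hKe)
    (fun e => .diagonal (hd e)) (fun e => (hle e).1) (fun e => (hle e).2)
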